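/- For every triangle in the Euclidean plane there is a triangle having it as its extouch triangle. Precisely: for any three noncollinear points A, B, C in the Euclidean plane, there exist noncollinear points X, Y, Z such that, setting s = (dist Y Z + dist Z X + dist X Y)/2, the point A lies on the segment [Y,Z] with dist Y A = s − dist X Y and dist Z A = s − dist Z X, the point B lies on the segment [Z,X] with dist Z B = s − dist Y Z and dist X B = s − dist X Y, and the point C lies on the segment [X,Y] with dist X C = s − dist Z X and dist Y C = s − dist Y Z. -/

import Mathlib

open EuclideanGeometry

/-- Solution of the linear critical point equations. -/
theorem eq_of_critical_equations {y z N p₁ p₂ r₁ r₂ : ℝ} (hy : 0 < y) (hz : 0 < z)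
    (hyz : 1 < y * z)
    (hre : y * ((z ^ 2 - 1) * p₁ + 2 * z * p₂) + z * ((y ^ 2 - 1) * r₁ - 2 * y * r₂) = N)
    (him : y * ((z ^ 2 - 1) * p₂ - 2 * z * p₁) + z * ((y ^ 2 - 1) * r₂ + 2 * y * r₁) = 0)
    (hdy : ((z ^ 2 - 1) * p₁ + 2 * z * p₂ + 2 * z * (y * r₁ - r₂)) * (y * z - 1) = N * z)
    (hdz : (2 * y * (z * p₁ + p₂) + (y ^ 2 - 1) * r₁ - 2 * y * r₂) * (y * z - 1) = N * y) :
    p₁ = N / (y * (z ^ 2 + 1) * (y * z - 1)) ∧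
    p₂ = N * ((y * z - 1) ^ 2 + y ^ 2 - z ^ 2) /
      (2 * (y + z) * y * (z ^ 2 + 1) * (y * z - 1)) ∧
    r₁ = N / (z * (y ^ 2 + 1) * (y * z - 1)) ∧
    r₂ = -(N * ((y * z - 1) ^ 2 + z ^ 2 - y ^ 2)) /
      (2 * (y + z) * z * (y ^ 2 + 1) * (y * z - 1)) := by
  have hD : 0 < y * z - 1 := by linarith
  obtain ⟨u, hu⟩ : ∃ u, u = y * ((z ^ 2 - 1) * p₁ + 2 * z * p₂) := ⟨_, rfl⟩
  obtain ⟨v, hv⟩ : ∃ v, v = y * ((z ^ 2 - 1) * p₂ - 2 * z * p₁) := ⟨_, rfl⟩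
  have ha : (y * z - 1) * ((y ^ 2 + 1) * u + 2 * y ^ 2 * (N - u) - 2 * y * v)
      = N * z * y * (y ^ 2 + 1) := by
    subst hu hv
    linear_combination y * (y ^ 2 + 1) * hdy - (y * z - 1) * (2 * y ^ 2 * hre + 2 * y * him)
  have hb : (y * z - 1) * (2 * z * (z * u - v) + (N - u) * (z ^ 2 + 1))
      = N * y * z * (z ^ 2 + 1) := by
    subst hu hv
    linear_combination z * (z ^ 2 + 1) * hdz - (y * z - 1) * (z ^ 2 + 1) * hre
  have hu' : u = N * y / (y + z) := by
    rw [eq_div_iff (by positivity)]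
    apply mul_left_cancel₀ (pow_ne_zero 2 hD.ne')
    linear_combination y * hb - z * ha
  have hv' : v = N * ((y * z - 1) ^ 2 + 2 * (y * z - 1) - (y + z) ^ 2) /
      (2 * (y + z) * (y * z - 1)) := by
    subst hu'
    rw [eq_div_iff (by positivity)]
    field_simp at hb
    apply mul_left_cancel₀ hz.ne'
    linear_combination -hb
  have hp₁ : y * (z ^ 2 + 1) ^ 2 * p₁ = (z ^ 2 - 1) * u - 2 * z * v := by subst hu hv; ring
  have hp₂ : y * (z ^ 2 + 1) ^ 2 * p₂ = (z ^ 2 - 1) * v + 2 * z * u := by subst hu hv; ring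
  have hr₁ : z * (y ^ 2 + 1) ^ 2 * r₁ = (y ^ 2 - 1) * (N - u) - 2 * y * v := by
    subst hu hv; linear_combination (y ^ 2 - 1) * hre + 2 * y * him
  have hr₂ : z * (y ^ 2 + 1) ^ 2 * r₂ = -(y ^ 2 - 1) * v - 2 * y * (N - u) := by
    subst hu hv; linear_combination (y ^ 2 - 1) * him - 2 * y * hre
  have hD₀ : z * y - 1 ≠ 0 := by rw [mul_comm]; exact hD.ne'
  clear hre him hdy hdz ha hb hu hv
  subst hu' hv'
  refine ⟨?_, ?_, ?_, ?_⟩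
  · apply mul_left_cancel₀ (show y * (z ^ 2 + 1) ^ 2 ≠ 0 by positivity)
    rw [hp₁]; field_simp; ring
  · apply mul_left_cancel₀ (show y * (z ^ 2 + 1) ^ 2 ≠ 0 by positivity)
    rw [hp₂]; field_simp; ring
  · apply mul_left_cancel₀ (show z * (y ^ 2 + 1) ^ 2 ≠ 0 by positivity)
    rw [hr₁]; field_simp; ring
  · apply mul_left_cancel₀ (show z * (y ^ 2 + 1) ^ 2 ≠ 0 by positivity)
    rw [hr₂]; field_simp; ring

noncomputable section

/-- Real part of `y (z - i)² b̄ + z (y + i)² c̄`. -/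
def circumRe (b₁ b₂ c₁ c₂ y z : ℝ) : ℝ :=
  y * ((z ^ 2 - 1) * b₁ - 2 * z * b₂) + z * ((y ^ 2 - 1) * c₁ + 2 * y * c₂)

/-- Imaginary part of `y (z - i)² b̄ + z (y + i)² c̄`. -/
def circumIm (b₁ b₂ c₁ c₂ y z : ℝ) : ℝ :=
  z * (2 * y * c₁ - (y ^ 2 - 1) * c₂) - y * ((z ^ 2 - 1) * b₂ + 2 * z * b₁)

/-- Squared norm of `y (z - i)² b̄ + z (y + i)² c̄`. -/
def circumNormSq (b₁ b₂ c₁ c₂ y z : ℝ) : ℝ :=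
  circumRe b₁ b₂ c₁ c₂ y z ^ 2 + circumIm b₁ b₂ c₁ c₂ y z ^ 2

end

theorem circumNormSq_lower_bound (b₁ b₂ c₁ c₂ : ℝ) {y z : ℝ} (hy : 0 < y) (hz : 0 < z) :
    4 * y * z * (y + z) * (y * z - 1) * (b₁ * c₂ - b₂ * c₁) ≤ circumNormSq b₁ b₂ c₁ c₂ y z := by
  -- Cauchy–Schwarz for the two coefficient vectors.
  have key : 0 ≤ (y * (z ^ 2 + 1)) ^ 2 * (b₁ ^ 2 + b₂ ^ 2) + (z * (y ^ 2 + 1)) ^ 2 * (c₁ ^ 2 + c₂ ^ 2)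
      + 2 * y * z * (((y * z - 1) ^ 2 - (y + z) ^ 2) * (b₁ * c₁ + b₂ * c₂)) := by
    have hm := abs_le.1 (abs_real_inner_le_norm !₂[b₁, b₂] !₂[c₁, c₂])
    simp only [EuclideanSpace.norm_eq, Fin.sum_univ_two, PiLp.inner_apply] at hm
    simp at hm
    set β := √(b₁ ^ 2 + b₂ ^ 2) with hβ
    set γ := √(c₁ ^ 2 + c₂ ^ 2) with hγ
    have h1 : β ^ 2 = b₁ ^ 2 + b₂ ^ 2 := Real.sq_sqrt (by positivity)
    have h2 : γ ^ 2 = c₁ ^ 2 + c₂ ^ 2 := Real.sq_sqrt (by positivity)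
    rw [← h1, ← h2]
    have h3 : 0 ≤ (y * z - 1) ^ 2 * (β * γ + (b₁ * c₁ + b₂ * c₂)) :=
      mul_nonneg (sq_nonneg _) (by linarith)
    have h4 : 0 ≤ (y + z) ^ 2 * (β * γ - (b₁ * c₁ + b₂ * c₂)) :=
      mul_nonneg (sq_nonneg _) (by linarith)
    have h5 := mul_nonneg (mul_nonneg hy.le hz.le) (add_nonneg h3 h4)
    nlinarith [sq_nonneg (y * (z ^ 2 + 1) * β - z * (y ^ 2 + 1) * γ)]
  have : circumNormSq b₁ b₂ c₁ c₂ y z = (y * (z ^ 2 + 1)) ^ 2 * (b₁ ^ 2 + b₂ ^ 2)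
      + (z * (y ^ 2 + 1)) ^ 2 * (c₁ ^ 2 + c₂ ^ 2)
      + 2 * y * z * (((y * z - 1) ^ 2 - (y + z) ^ 2) * (b₁ * c₁ + b₂ * c₂))
      + 4 * y * z * (y + z) * (y * z - 1) * (b₁ * c₂ - b₂ * c₁) := by
    unfold circumNormSq circumRe circumIm; ring
  linarith

theorem hasDerivAt_quadratic (α β γ t : ℝ) :
    HasDerivAt (fun t => α * t ^ 2 + β * t + γ) (2 * α * t + β) t := by
  have := (((hasDerivAt_pow 2 t).const_mul α).add ((hasDerivAt_id t).const_mul β)).add_const γ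
  refine (this.congr_deriv (by simp; ring)).congr_of_eventuallyEq ?_
  exact Filter.Eventually.of_forall fun x => by simp

/-- Vanishing of the `y`-derivative at a minimum of `circumNormSq b₁ b₂ c₁ c₂ y z / (y * z - 1) ^ 2`,
the squared semiperimeter, up to a constant factor, of the largest circumscribed triangle with
half-angle cotangents `y` and `z`. -/
theorem circumNormSq_critical_left {b₁ b₂ c₁ c₂ y z H : ℝ}
    (hmin : ∀ᶠ t in nhds y, H * (t * z - 1) ^ 2 ≤ circumNormSq b₁ b₂ c₁ c₂ t z)
    (heq : circumNormSq b₁ b₂ c₁ c₂ y z = H * (y * z - 1) ^ 2) :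
    circumRe b₁ b₂ c₁ c₂ y z * ((z ^ 2 - 1) * b₁ - 2 * z * b₂ + 2 * z * (y * c₁ + c₂)) +
    circumIm b₁ b₂ c₁ c₂ y z * (2 * z * (c₁ - y * c₂) - ((z ^ 2 - 1) * b₂ + 2 * z * b₁))
      = H * (y * z - 1) * z := by
  have hR : HasDerivAt (fun t => circumRe b₁ b₂ c₁ c₂ t z)
      ((z ^ 2 - 1) * b₁ - 2 * z * b₂ + 2 * z * (y * c₁ + c₂)) y := by
    convert hasDerivAt_quadratic (z * c₁) ((z ^ 2 - 1) * b₁ - 2 * z * b₂ + 2 * z * c₂)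
      (-z * c₁) y using 1
    · ext t; unfold circumRe; ring
    · ring
  have hI : HasDerivAt (fun t => circumIm b₁ b₂ c₁ c₂ t z)
      (2 * z * (c₁ - y * c₂) - ((z ^ 2 - 1) * b₂ + 2 * z * b₁)) y := by
    convert hasDerivAt_quadratic (-z * c₂) (2 * z * c₁ - ((z ^ 2 - 1) * b₂ + 2 * z * b₁))
      (z * c₂) y using 1
    · ext t; unfold circumIm; ring
    · ring
  have hD : HasDerivAt (fun t => H * (t * z - 1) ^ 2) (2 * H * z * (y * z - 1)) y := by
    convert hasDerivAt_quadratic (H * z ^ 2) (-2 * H * z) H y using 1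
    · ext t; ring
    · ring
  have hF := ((hR.pow 2).add (hI.pow 2)).sub hD
  have hloc : IsLocalMin (fun t => circumNormSq b₁ b₂ c₁ c₂ t z - H * (t * z - 1) ^ 2) y := by
    filter_upwards [hmin] with t ht
    simp only [heq]; linarith
  have := hloc.hasDerivAt_eq_zero hF
  simp at this
  linarith

theorem circumNormSq_swap (b₁ b₂ c₁ c₂ y z : ℝ) :
    circumNormSq b₁ b₂ c₁ c₂ y z = circumNormSq c₁ (-c₂) b₁ (-b₂) z y := by
  unfold circumNormSq circumRe circumIm; ring

theorem exists_circumNormSq_minimizer {b₁ b₂ c₁ c₂ : ℝ} (hΔ : 0 < b₁ * c₂ - b₂ * c₁) :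
    ∃ y z H : ℝ, 0 < y ∧ 0 < z ∧ 1 < y * z ∧
      circumNormSq b₁ b₂ c₁ c₂ y z = H * (y * z - 1) ^ 2 ∧
      ∀ y' z', 0 < y' → 0 < z' → 1 < y' * z' →
        H * (y' * z' - 1) ^ 2 ≤ circumNormSq b₁ b₂ c₁ c₂ y' z' := by
  set Δ := b₁ * c₂ - b₂ * c₁
  set F : ℝ × ℝ → ℝ := fun q => circumNormSq b₁ b₂ c₁ c₂ q.1 q.2 / (q.1 * q.2 - 1) ^ 2 with hF
  set K := F (2, 2) / (4 * Δ) with hK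
  set S : Set (ℝ × ℝ) := (Set.Icc 0 K ×ˢ Set.Icc 0 K) ∩ {q | 1 + 2 / K ≤ q.1 * q.2} with hS
  have hsub : ∀ y z : ℝ, 0 < y → 0 < z → 1 < y * z → F (y, z) ≤ F (2, 2) → 0 < K ∧ (y, z) ∈ S := by
    intro y z hy hz hyz hle
    have hD : 0 < y * z - 1 := by linarith
    have h1 : y * z * (y + z) / (y * z - 1) ≤ K := by
      rw [hK, div_le_div_iff₀ hD (by positivity)]
      have h2 := circumNormSq_lower_bound b₁ b₂ c₁ c₂ hy hz
      have h3 : circumNormSq b₁ b₂ c₁ c₂ y z ≤ F (2, 2) * (y * z - 1) ^ 2 := by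
        rwa [hF, div_le_iff₀ (by positivity)] at hle
      apply le_of_mul_le_mul_right _ hD
      calc _ = 4 * y * z * (y + z) * (y * z - 1) * Δ := by ring
        _ ≤ _ := h2
        _ ≤ _ := h3
        _ = _ := by ring
    have hKpos : 0 < K := lt_of_lt_of_le (by positivity) h1
    rw [div_le_iff₀ hD] at h1
    have hσ : 2 ≤ y + z := by nlinarith [sq_nonneg (y - z)]
    have h4 : y + z ≤ K := by
      have : y * z * (y + z) ≤ y * z * K := by nlinarith
      exact le_of_mul_le_mul_left this (by positivity)
    refine ⟨hKpos, ⟨⟨⟨hy.le, by simp; linarith⟩, ⟨hz.le, by simp; linarith⟩⟩, ?_⟩⟩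
    have : 2 / K ≤ y * z - 1 := by
      rw [div_le_iff₀ hKpos]; nlinarith
    simp only [Set.mem_ofPred_eq]; linarith
  obtain ⟨hKpos, h22⟩ := hsub 2 2 (by norm_num) (by norm_num) (by norm_num) le_rfl
  have hpos : ∀ q ∈ S, 0 < q.1 ∧ 0 < q.2 ∧ 1 < q.1 * q.2 := by
    rintro ⟨y, z⟩ ⟨⟨hy, hz⟩, hyz⟩
    simp only [Set.mem_ofPred_eq] at hyz
    have h1 : 1 < y * z := lt_of_lt_of_le (by linarith [div_pos two_pos hKpos]) hyz
    refine ⟨lt_of_le_of_ne hy.1 ?_, lt_of_le_of_ne hz.1 ?_, h1⟩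
    · rintro h; simp only at h; rw [← h] at h1; norm_num at h1
    · rintro h; simp only at h; rw [← h] at h1; norm_num at h1
  have hcomp : IsCompact S := (isCompact_Icc.prod isCompact_Icc).inter_right
    (isClosed_le continuous_const (by fun_prop))
  have hcont : ContinuousOn F S := by
    refine ContinuousOn.div ?_ (by fun_prop) fun q hq => ?_
    · unfold circumNormSq circumRe circumIm; fun_prop
    · have := (hpos q hq).2.2
      exact pow_ne_zero 2 (by linarith)
  obtain ⟨⟨y, z⟩, hq, hmin⟩ := hcomp.exists_isMinOn ⟨_, h22⟩ hcont
  obtain ⟨hy, hz, hyz⟩ := hpos _ hq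
  simp only at hy hz hyz
  refine ⟨y, z, F (y, z), hy, hz, hyz, ?_, fun y' z' hy' hz' hyz' => ?_⟩
  · rw [hF, div_mul_cancel₀]
    exact pow_ne_zero 2 (by simp only; linarith)
  · have hle : F (y, z) ≤ F (y', z') := by
      by_cases h : F (y', z') ≤ F (2, 2)
      · exact hmin (hsub y' z' hy' hz' hyz' h).2
      · exact (hmin h22).trans (not_le.1 h).le
    rwa [hF, le_div_iff₀ (by simp only; have : 0 < y' * z' - 1 := by linarith
                             positivity)] at hle

/-- The tangent lengths of the circumscribed triangle, up to a common factor `√t`. -/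
theorem exists_scaled_lengths_of_pos {b₁ b₂ c₁ c₂ : ℝ} (hΔ : 0 < b₁ * c₂ - b₂ * c₁) :
    ∃ x y z t : ℝ, 0 < x ∧ 0 < y ∧ 0 < z ∧ 0 < t ∧
      ((z + x) * b₁ - (x + y) * c₁) ^ 2 + ((z + x) * b₂ - (x + y) * c₂) ^ 2
        = (2 * y * z) ^ 2 * t ∧
      ((x - z) * b₁ - (x + y) * c₁) ^ 2 + ((x - z) * b₂ - (x + y) * c₂) ^ 2
        = (2 * x * z) ^ 2 * t ∧
      ((x - y) * c₁ - (z + x) * b₁) ^ 2 + ((x - y) * c₂ - (z + x) * b₂) ^ 2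
        = (2 * x * y) ^ 2 * t := by
  obtain ⟨y, z, H, hy, hz, hyz, heq, hmin⟩ := exists_circumNormSq_minimizer hΔ
  have hD : 0 < y * z - 1 := by linarith
  have hcy := circumNormSq_critical_left (b₁ := b₁) (b₂ := b₂) (c₁ := c₁) (c₂ := c₂)
    (y := y) (z := z) (H := H)
    (by
      filter_upwards [lt_mem_nhds hy, (by fun_prop :
        Continuous fun t : ℝ => t * z).continuousAt.eventually_const_lt hyz] with t h1 h2
      exact hmin t z h1 hz h2) heq
  have hcz := circumNormSq_critical_left (b₁ := c₁) (b₂ := -c₂) (c₁ := b₁) (c₂ := -b₂)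
    (y := z) (z := y) (H := H)
    (by
      filter_upwards [lt_mem_nhds hz, (by fun_prop :
        Continuous fun t : ℝ => y * t).continuousAt.eventually_const_lt hyz] with t h1 h2
      rw [← circumNormSq_swap, mul_comm t y]
      exact hmin y t hy h1 h2) (by rw [← circumNormSq_swap, mul_comm z y]; exact heq)
  have hNpos : 0 < circumNormSq b₁ b₂ c₁ c₂ y z :=
    lt_of_lt_of_le (by positivity) (circumNormSq_lower_bound b₁ b₂ c₁ c₂ hy hz)
  set N := circumNormSq b₁ b₂ c₁ c₂ y z with hN
  set w₁ := circumRe b₁ b₂ c₁ c₂ y z with hw₁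
  set w₂ := circumIm b₁ b₂ c₁ c₂ y z with hw₂
  have hNw : N = w₁ ^ 2 + w₂ ^ 2 := rfl
  have hs₁ : circumRe c₁ (-c₂) b₁ (-b₂) z y = w₁ := by rw [hw₁]; unfold circumRe; ring
  have hs₂ : circumIm c₁ (-c₂) b₁ (-b₂) z y = -w₂ := by rw [hw₂]; unfold circumIm; ring
  rw [hs₁, hs₂] at hcz
  unfold circumRe at hw₁
  unfold circumIm at hw₂
  obtain ⟨hp₁, hp₂, hr₁, hr₂⟩ := eq_of_critical_equations (N := N)
    (p₁ := b₁ * w₁ - b₂ * w₂) (p₂ := -(b₁ * w₂) - b₂ * w₁)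
    (r₁ := c₁ * w₁ - c₂ * w₂) (r₂ := -(c₁ * w₂) - c₂ * w₁) hy hz hyz
    (by rw [hNw]; linear_combination -w₁ * hw₁ - w₂ * hw₂)
    (by linear_combination w₂ * hw₁ - w₁ * hw₂)
    (by linear_combination (y * z - 1) * hcy - z * heq)
    (by linear_combination (y * z - 1) * hcz - y * heq)
  have hcomb : ∀ α β : ℝ, N * ((α * b₁ + β * c₁) ^ 2 + (α * b₂ + β * c₂) ^ 2) =
      (α * (b₁ * w₁ - b₂ * w₂) + β * (c₁ * w₁ - c₂ * w₂)) ^ 2 +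
      (α * (-(b₁ * w₂) - b₂ * w₁) + β * (-(c₁ * w₂) - c₂ * w₁)) ^ 2 := by
    intro α β; rw [hNw]; ring
  rw [hp₁, hp₂, hr₁, hr₂] at hcomb
  clear_value N
  refine ⟨(y + z) / (y * z - 1), y, z, N / (2 * (y + z) * y * z) ^ 2, by positivity, hy, hz,
    by positivity, ?_, ?_, ?_⟩
  · apply mul_left_cancel₀ hNpos.ne'
    convert hcomb (z + (y + z) / (y * z - 1)) (-((y + z) / (y * z - 1) + y)) using 1
    · ring
    · field_simp
      ring
  · apply mul_left_cancel₀ hNpos.ne'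
    convert hcomb ((y + z) / (y * z - 1) - z) (-((y + z) / (y * z - 1) + y)) using 1
    · ring
    · field_simp
      ring
  · apply mul_left_cancel₀ hNpos.ne'
    convert hcomb (-(z + (y + z) / (y * z - 1))) ((y + z) / (y * z - 1) - y) using 1
    · ring
    · field_simp
      ring

/-- The distances from the vertices of the circumscribed triangle to the touch points, where the
inscribed triangle has its vertices at `0`, `(b₁, b₂)` and `(c₁, c₂)`. -/
theorem exists_tangent_lengths {b₁ b₂ c₁ c₂ : ℝ} (hΔ : b₁ * c₂ - b₂ * c₁ ≠ 0) :
    ∃ x y z : ℝ, 0 < x ∧ 0 < y ∧ 0 < z ∧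
      ((z + x) * b₁ - (x + y) * c₁) ^ 2 + ((z + x) * b₂ - (x + y) * c₂) ^ 2
        = (2 * y * z) ^ 2 ∧
      ((x - z) * b₁ - (x + y) * c₁) ^ 2 + ((x - z) * b₂ - (x + y) * c₂) ^ 2
        = (2 * x * z) ^ 2 ∧
      ((x - y) * c₁ - (z + x) * b₁) ^ 2 + ((x - y) * c₂ - (z + x) * b₂) ^ 2
        = (2 * x * y) ^ 2 := by
  wlog hpos : 0 < b₁ * c₂ - b₂ * c₁ generalizing b₂ c₂
  · have hneg : 0 < b₁ * -c₂ - -b₂ * c₁ := by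
      have := lt_of_le_of_ne (not_lt.1 hpos) hΔ
      linarith
    obtain ⟨x, y, z, hx, hy, hz, h1, h2, h3⟩ := this hneg.ne' hneg
    exact ⟨x, y, z, hx, hy, hz, by linear_combination h1, by linear_combination h2,
      by linear_combination h3⟩
  obtain ⟨x, y, z, t, hx, hy, hz, ht, h1, h2, h3⟩ := exists_scaled_lengths_of_pos hpos
  obtain ⟨l, hl, rfl⟩ : ∃ l : ℝ, 0 < l ∧ t = l ^ 2 :=
    ⟨√t, Real.sqrt_pos.2 ht, (Real.sq_sqrt ht.le).symm⟩
  exact ⟨l * x, l * y, l * z, by positivity, by positivity, by positivity,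
    by linear_combination l ^ 2 * h1, by linear_combination l ^ 2 * h2,
    by linear_combination l ^ 2 * h3⟩

theorem det_ne_zero_of_not_collinear {A B C : EuclideanSpace ℝ (Fin 2)}
    (h : ¬ Collinear ℝ ({A, B, C} : Set (EuclideanSpace ℝ (Fin 2)))) :
    (B 0 - A 0) * (C 1 - A 1) - (B 1 - A 1) * (C 0 - A 0) ≠ 0 := by
  contrapose! h
  rw [collinear_iff_of_mem (p₀ := A) (by simp)]
  by_cases hB : B = A
  · refine ⟨C - A, ?_⟩
    simp only [Set.mem_insert_iff, Set.mem_singleton_iff, forall_eq_or_imp, forall_eq]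
    exact ⟨⟨0, by simp⟩, ⟨0, by simp [hB]⟩, ⟨1, by simp⟩⟩
  · refine ⟨B - A, ?_⟩
    simp only [Set.mem_insert_iff, Set.mem_singleton_iff, forall_eq_or_imp, forall_eq]
    refine ⟨⟨0, by simp⟩, ⟨1, by simp⟩, ?_⟩
    have hn : (B 0 - A 0) ^ 2 + (B 1 - A 1) ^ 2 ≠ 0 := by
      intro h0
      apply hB
      ext i
      fin_cases i
      · simp only [Fin.zero_eta]; nlinarith [sq_nonneg (B 0 - A 0), sq_nonneg (B 1 - A 1)]
      · simp only [Fin.mk_one]; nlinarith [sq_nonneg (B 0 - A 0), sq_nonneg (B 1 - A 1)]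
    refine ⟨((B 0 - A 0) * (C 0 - A 0) + (B 1 - A 1) * (C 1 - A 1)) /
      ((B 0 - A 0) ^ 2 + (B 1 - A 1) ^ 2), ?_⟩
    ext i
    fin_cases i
    · simp
      field_simp
      linear_combination -(B 1 - A 1) * h
    · simp
      field_simp
      linear_combination (B 0 - A 0) * h

theorem dist_eq_of_sq_eq {P Q : EuclideanSpace ℝ (Fin 2)} {r : ℝ} (hr : 0 ≤ r)
    (h : (P 0 - Q 0) ^ 2 + (P 1 - Q 1) ^ 2 = r ^ 2) : dist P Q = r := by
  rw [EuclideanSpace.dist_eq, Fin.sum_univ_two, Real.dist_eq, Real.dist_eq, sq_abs, sq_abs, h,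
    Real.sqrt_sq hr]

/-- A point dividing `[P, Q]` in the ratio `q : p` splits its length in the same ratio. -/
theorem mem_segment_and_dist_of_weighted {E : Type*} [NormedAddCommGroup E] [NormedSpace ℝ E]
    {P Q M : E} {p q : ℝ} (hp : 0 < p) (hq : 0 < q)
    (hM : (p + q) • M = p • P + q • Q) (hd : dist P M = q) :
    M ∈ segment ℝ P Q ∧ dist Q M = p ∧ dist P Q = p + q := by
  have hPM : p • (P - M) = q • (M - Q) := by
    rw [smul_sub, smul_sub, sub_eq_sub_iff_add_eq_add, ← hM]; module
  have hQM : dist Q M = p := by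
    have := congrArg norm hPM
    rw [norm_smul, norm_smul, ← dist_eq_norm, ← dist_eq_norm, hd, Real.norm_of_nonneg hp.le,
      Real.norm_of_nonneg hq.le, mul_comm p q, dist_comm M Q] at this
    exact (mul_left_cancel₀ hq.ne' this).symm
  have hmem : M ∈ segment ℝ P Q := by
    refine ⟨p / (p + q), q / (p + q), by positivity, by positivity, by field_simp, ?_⟩
    rw [div_eq_inv_mul, div_eq_inv_mul, mul_smul, mul_smul, ← smul_add, ← hM,
      inv_smul_smul₀ (by positivity)]
  refine ⟨hmem, hQM, ?_⟩
  rw [← dist_add_dist_of_mem_segment hmem, hd, dist_comm M Q, hQM, add_comm]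

theorem Collinear.of_mem_segments {E : Type*} [NormedAddCommGroup E] [NormedSpace ℝ E]
    {A B C X Y Z : E} (h : Collinear ℝ ({X, Y, Z} : Set E)) (hA : A ∈ segment ℝ Y Z)
    (hB : B ∈ segment ℝ Z X) (hC : C ∈ segment ℝ X Y) : Collinear ℝ ({A, B, C} : Set E) := by
  rw [collinear_iff_exists_forall_eq_smul_vadd] at h ⊢
  obtain ⟨p₀, v, h⟩ := h
  simp only [Set.mem_insert_iff, Set.mem_singleton_iff, forall_eq_or_imp, forall_eq,
    vadd_eq_add] at h ⊢
  obtain ⟨⟨r, rfl⟩, ⟨s, rfl⟩, ⟨t, rfl⟩⟩ := h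
  have key : ∀ {M : E} {a b : ℝ}, M ∈ segment ℝ (a • v + p₀) (b • v + p₀) →
      ∃ c : ℝ, M = c • v + p₀ := by
    rintro M a b ⟨m, n, -, -, hmn, rfl⟩
    refine ⟨m * a + n * b, ?_⟩
    obtain rfl : n = 1 - m := by linarith
    module
  exact ⟨p₀, v, key hA, key hB, key hC⟩

/-- For every triangle in the Euclidean plane there is a triangle having it as its
extouch triangle. -/
theorem exists_triangle_with_given_extouch_triangle
    (A B C : EuclideanSpace ℝ (Fin 2)) (h : ¬ Collinear ℝ ({A, B, C} : Set (EuclideanSpace ℝ (Fin 2)))) :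
    ∃ X Y Z : EuclideanSpace ℝ (Fin 2),
      ¬ Collinear ℝ ({X, Y, Z} : Set (EuclideanSpace ℝ (Fin 2))) ∧
      (let s := (dist Y Z + dist Z X + dist X Y) / 2
       A ∈ segment ℝ Y Z ∧ dist Y A = s - dist X Y ∧ dist Z A = s - dist Z X ∧
       B ∈ segment ℝ Z X ∧ dist Z B = s - dist Y Z ∧ dist X B = s - dist X Y ∧
       C ∈ segment ℝ X Y ∧ dist X C = s - dist Z X ∧ dist Y C = s - dist Y Z) := by
  obtain ⟨x, y, z, hx, hy, hz, h1, h2, h3⟩ :=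
    exists_tangent_lengths (det_ne_zero_of_not_collinear h)
  obtain ⟨X, hX⟩ : ∃ X, X = (2 * x)⁻¹ • ((z + x) • B + (x + y) • C - (y + z) • A) := ⟨_, rfl⟩
  obtain ⟨Y, hY⟩ : ∃ Y, Y = (2 * y)⁻¹ • ((x + y) • C + (y + z) • A - (z + x) • B) := ⟨_, rfl⟩
  obtain ⟨Z, hZ⟩ : ∃ Z, Z = (2 * z)⁻¹ • ((y + z) • A + (z + x) • B - (x + y) • C) := ⟨_, rfl⟩
  have hA : (z + y) • A = z • Z + y • Y := by
    rw [hY, hZ]; match_scalars <;> field_simp <;> ring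
  have hB : (z + x) • B = z • Z + x • X := by
    rw [hX, hZ]; match_scalars <;> field_simp <;> ring
  have hC : (y + x) • C = y • Y + x • X := by
    rw [hX, hY]; match_scalars <;> field_simp <;> ring
  have dA : dist Z A = y := by
    refine dist_eq_of_sq_eq hy.le ?_
    rw [hZ]
    apply mul_left_cancel₀ (show (2 * z) ^ 2 ≠ 0 by positivity)
    simp
    field_simp
    left
    linear_combination h1
  have dB : dist Z B = x := by
    refine dist_eq_of_sq_eq hx.le ?_
    rw [hZ]
    apply mul_left_cancel₀ (show (2 * z) ^ 2 ≠ 0 by positivity)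
    simp
    field_simp
    left
    linear_combination h2
  have dC : dist Y C = x := by
    refine dist_eq_of_sq_eq hx.le ?_
    rw [hY]
    apply mul_left_cancel₀ (show (2 * y) ^ 2 ≠ 0 by positivity)
    simp
    field_simp
    left
    linear_combination h3
  obtain ⟨mA, dA', dYZ⟩ := mem_segment_and_dist_of_weighted hz hy hA dA
  obtain ⟨mB, dB', dZX⟩ := mem_segment_and_dist_of_weighted hz hx hB dB
  obtain ⟨mC, dC', dXY⟩ := mem_segment_and_dist_of_weighted hy hx hC dC
  rw [segment_symm] at mA mC
  rw [dist_comm] at dYZ dXY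
  refine ⟨X, Y, Z, fun hcol => h (hcol.of_mem_segments mA mB mC), ?_⟩
  simp only [dYZ, dZX, dXY, dA, dB, dC, dA', dB', dC']
  exact ⟨mA, by ring, by ring, mB, by ring, by ring, mC, by ring, by ring⟩
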